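/- Let R be a commutative ring, x, y, z, w ∈ R, and let f be a function assigning an element of R to every binary delta-matroid whose ground set is a finite set of natural numbers. Suppose f satisfies the Tutte relations: for every such binary delta-matroid D = (E; Φ) and every e ∈ E, (i) f(D) = x·f(D ∖ e) + y·f(D/e) if e is neither a loop nor a coloop of D, (ii) f(D) = z·f(D ∖ e) if e is a loop of D, and (iii) f(D) = w·f(D/e) if e is a coloop of D. Then f satisfies the 4-term relation: for every binary delta-matroid D = (E; Φ) with E a finite set of natural numbers and every pair of distinct elements a, b ∈ E, f(D) − f(D'_{ab}) = f(D̃_{ab}) − f((D̃_{ab})'_{ab}). -/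

import Mathlib

open scoped symmDiff

variable {α : Type*} [DecidableEq α]

/-- A (proper) delta-matroid: a nonempty collection `Φ` of subsets of the ground set `E`
satisfying the Symmetric Exchange Axiom. -/
def IsDeltaMatroid (E : Finset α) (Φ : Set (Finset α)) : Prop :=
  Φ.Nonempty ∧ (∀ φ ∈ Φ, φ ⊆ E) ∧
    ∀ φ₁ ∈ Φ, ∀ φ₂ ∈ Φ, ∀ e ∈ φ₁ ∆ φ₂, ∃ e' ∈ φ₁ ∆ φ₂, φ₁ ∆ ({e, e'} : Finset α) ∈ Φ

/-- The principal submatrix of `A` with rows and columns indexed by `U`. -/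
def principalSubmatrix (A : Matrix α α (ZMod 2)) (U : Finset α) :
    Matrix U U (ZMod 2) :=
  A.submatrix (fun i => (i : α)) (fun i => (i : α))

/-- `U` is nondegenerate for `A`: the principal submatrix `A_U` is invertible over `F₂`
(the empty submatrix has determinant `1`, hence is invertible by convention). -/
def Nondeg (A : Matrix α α (ZMod 2)) (U : Finset α) : Prop :=
  IsUnit (principalSubmatrix A U).det

/-- Twist of a collection of feasible sets by a subset `T`:
`Φ * T = {φ ∆ T : φ ∈ Φ}`. -/
def twist (Φ : Set (Finset α)) (T : Finset α) : Set (Finset α) :=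
  {ψ | ∃ φ ∈ Φ, ψ = φ ∆ T}

/-- A binary delta-matroid on ground set `E`: a twist of the nondegeneracy set system of a
symmetric matrix over `F₂` (the matrix is indexed by the ambient type; only its `E × E`
block is ever used, since only principal submatrices `A_U` with `U ⊆ E` occur). -/
def IsBinaryDeltaMatroid (E : Finset α) (Φ : Set (Finset α)) : Prop :=
  ∃ (A : Matrix α α (ZMod 2)) (T : Finset α), A.IsSymm ∧ T ⊆ E ∧
    Φ = {ψ | ∃ U : Finset α, U ⊆ E ∧ Nondeg A U ∧ ψ = U ∆ T}

/-- Feasible sets of the deletion `D ∖ e`. -/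
def delSet (Φ : Set (Finset α)) (e : α) : Set (Finset α) :=
  {φ ∈ Φ | e ∉ φ}

/-- Feasible sets of the contraction `D / e`. -/
def conSet (Φ : Set (Finset α)) (e : α) : Set (Finset α) :=
  {ψ | ∃ φ ∈ Φ, e ∈ φ ∧ ψ = φ.erase e}

/-- Feasible sets of the handle slide (second Vassiliev move) of `a` over `b`:
`Φ ∆ {φ ∪ {a} : φ ⊆ E ∖ {a, b}, φ ∪ {b} ∈ Φ}`. -/
def slideSet (E : Finset α) (Φ : Set (Finset α)) (a b : α) : Set (Finset α) :=
  Φ ∆ {ψ | ∃ φ : Finset α, φ ⊆ E \ {a, b} ∧ φ ∪ {b} ∈ Φ ∧ ψ = φ ∪ {a}}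

/-- Feasible sets of the first Vassiliev move (exchange of handle ends):
`D\'_{ab} = ((D * {b})~_{ab}) * {b}`. -/
def firstMove (E : Finset α) (Φ : Set (Finset α)) (a b : α) : Set (Finset α) :=
  twist (slideSet E (twist Φ {b}) a b) {b}

/-! When some feasible set contains `b` but not `a`, and some feasible set contains neither, all
four delta-matroids can be expanded by deletion and contraction of `b`. The deletions of `D` and
`D'_{ab}` agree, as do those of the two other terms, so both sides become differences of
contraction terms; these agree because the contractions of `D` and of its handle slide agree, and
likewise after the first Vassiliev move. Otherwise the first moves or the handle slide are trivial.

The handle slide stays binary because it is the base change `e_a ↦ e_a + e_b` once the set system is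
represented by a matrix based at a feasible set avoiding `a` and `b`, which a principal pivot
provides: over `F₂` a Gram determinant is additive in each vector, the two cross terms being equal.
-/

section Matrices

open scoped Matrix

variable {n ι R M : Type*} [CommRing R] [AddCommGroup M] [Module R M]

/-- The bilinear form with matrix `A`, on finitely supported vectors so that the index type may be
infinite. Changing the basis in it expresses simultaneous row and column operations on `A`. -/
noncomputable def formOfMatrix (A : Matrix n n R) :
    LinearMap.BilinForm R (n →₀ R) :=
  Finsupp.linearCombination R fun i => Finsupp.linearCombination R (A i)

theorem formOfMatrix_single_single (A : Matrix n n R) (i j : n) :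
    formOfMatrix A (Finsupp.single i 1) (Finsupp.single j 1) = A i j := by
  simp [formOfMatrix]

theorem isSymm_formOfMatrix {A : Matrix n n R} (hA : A.IsSymm) :
    (formOfMatrix A).IsSymm := by
  refine ⟨fun u v => ?_⟩
  suffices formOfMatrix A = (formOfMatrix A).flip from LinearMap.congr_fun₂ this u v
  ext i j
  simp [formOfMatrix_single_single, hA.apply]

/-- The Gram matrix of a family of vectors with respect to a bilinear form; principal submatrices
of the matrix of the form are Gram matrices of families of basis vectors. -/
def gramMatrix (B : LinearMap.BilinForm R M) (v : ι → M) : Matrix ι ι R :=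
  Matrix.of fun i j => B (v i) (v j)

theorem gramMatrix_formOfMatrix_single (A : Matrix n n R) (v : ι → n) :
    gramMatrix (formOfMatrix A) (fun i => Finsupp.single (v i) 1) = A.submatrix v v := by
  ext i j
  exact formOfMatrix_single_single A (v i) (v j)

theorem exists_isSymm_submatrix_eq {p : n → Prop} {C : Matrix {i // p i} {i // p i} R}
    (hC : C.IsSymm) : ∃ B : Matrix n n R, B.IsSymm ∧ B.submatrix (↑) (↑) = C := by
  classical
  let e := (Equiv.sumCompl p).symm
  refine ⟨(Matrix.fromBlocks C 0 0 0).submatrix e e,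
    (hC.fromBlocks Matrix.transpose_zero Matrix.isSymm_zero).submatrix e, ?_⟩
  ext i j
  simp [e]

variable [DecidableEq n]

/-- The matrix obtained from `A` by adding row `b` to row `a` and column `b` to column `a`, that
is, by replacing the basis vector `e_a` with `e_a + e_b`. -/
noncomputable def slideMatrix (A : Matrix n n R) (a b : n) : Matrix n n R :=
  gramMatrix (formOfMatrix A)
    (Function.update (Finsupp.single · 1) a (Finsupp.single a 1 + Finsupp.single b 1))

theorem isSymm_slideMatrix {A : Matrix n n R} (hA : A.IsSymm) (a b : n) :
    (slideMatrix A a b).IsSymm :=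
  Matrix.IsSymm.ext fun _ _ => (isSymm_formOfMatrix hA).eq _ _

/-- The rows of `A` indexed by `s`, completed by rows of the identity matrix. Its determinant is
the principal minor of `A` at `s`, but unlike the principal submatrices these matrices all have
the same index type and can be multiplied. -/
def rowPatch (A : Matrix n n R) (s : Finset n) : Matrix n n R :=
  Matrix.of fun i => if i ∈ s then A i else (1 : Matrix n n R) i

theorem rowPatch_apply (A : Matrix n n R) (s : Finset n) (i : n) :
    rowPatch A s i = if i ∈ s then A i else (1 : Matrix n n R) i :=
  rfl

variable [Fintype n]

theorem det_rowPatch (A : Matrix n n R) (s : Finset n) :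
    (rowPatch A s).det = (A.submatrix ((↑) : s → n) (↑)).det := by
  have lower_left : ∀ i, i ∉ s → ∀ j, j ∈ s → rowPatch A s i j = 0 := fun i hi j hj => by
    rw [rowPatch_apply, if_neg hi, Matrix.one_apply_ne (ne_of_mem_of_not_mem hj hi).symm]
  have upper : (rowPatch A s).toSquareBlockProp (· ∈ s) = A.submatrix ((↑) : s → n) (↑) := by
    ext i j
    simp [Matrix.toSquareBlockProp, rowPatch_apply]
  have lower : (rowPatch A s).toSquareBlockProp (· ∉ s) = 1 := by
    ext i j
    simp [Matrix.toSquareBlockProp, rowPatch_apply, i.2, Matrix.one_apply,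
      Subtype.ext_iff]
  rw [Matrix.twoBlockTriangular_det _ (· ∈ s) lower_left, upper, lower, Matrix.det_one, mul_one]
  congr!

/-- The principal pivot transform `A * s`: exchanging the roles of input and output in the
coordinates `s` of the linear map `A`. -/
noncomputable def principalPivot (A : Matrix n n R) (s : Finset n) : Matrix n n R :=
  rowPatch A sᶜ * (rowPatch A s)⁻¹

theorem rowPatch_principalPivot_mul {A : Matrix n n R} {s : Finset n}
    (hs : IsUnit (rowPatch A s).det) (t : Finset n) :
    rowPatch (principalPivot A s) t * rowPatch A s = rowPatch A (t ∆ s) := by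
  funext i
  rw [Matrix.mul_apply_eq_vecMul]
  by_cases ht : i ∈ t
  · have pivot_row : principalPivot A s i ᵥ* rowPatch A s = rowPatch A sᶜ i := by
      rw [← Matrix.mul_apply_eq_vecMul, principalPivot, Matrix.nonsing_inv_mul_cancel_right _ _ hs]
    rw [rowPatch_apply, if_pos ht, pivot_row]
    by_cases hs : i ∈ s <;> simp [rowPatch_apply, Finset.mem_symmDiff, ht, hs]
  · have one_row : (1 : Matrix n n R) i ᵥ* rowPatch A s = rowPatch A s i := by
      rw [← Matrix.mul_apply_eq_vecMul, Matrix.one_mul]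
    rw [rowPatch_apply, if_neg ht, one_row]
    by_cases hs : i ∈ s <;> simp [rowPatch_apply, Finset.mem_symmDiff, ht, hs]

theorem det_submatrix_principalPivot_mul {A : Matrix n n R} {s : Finset n}
    (hs : IsUnit (A.submatrix ((↑) : s → n) (↑)).det) (t : Finset n) :
    ((principalPivot A s).submatrix ((↑) : t → n) (↑)).det *
        (A.submatrix ((↑) : s → n) (↑)).det =
      (A.submatrix ((↑) : ↥(t ∆ s) → n) (↑)).det := by
  rw [← det_rowPatch] at hs
  simp only [← det_rowPatch]
  rw [← Matrix.det_mul, rowPatch_principalPivot_mul hs]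

theorem rowPatch_eq_diagonal_mul_add (A : Matrix n n R) (s : Finset n) :
    rowPatch A s = Matrix.diagonal (fun i => if i ∈ s then 1 else 0) * A +
      Matrix.diagonal (fun i => if i ∈ s then 0 else 1) := by
  ext i j
  by_cases hi : i ∈ s <;> simp [rowPatch, hi, Matrix.diagonal_apply, Matrix.one_apply]

theorem mul_add_one_sub_mul_one_sub_mul_add {S : Type*} [Ring S] {p : S}
    (hp : IsIdempotentElem p) (a : S) :
    (a * p + (1 - p)) * ((1 - p) * a + p) = a * p + (1 - p) * a :=
  calc (a * p + (1 - p)) * ((1 - p) * a + p)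
      = a * (p * (1 - p)) * a + a * (p * p) + (1 - p) * (1 - p) * a + (1 - p) * p := by
        noncomm_ring
    _ = a * p + (1 - p) * a := by
        rw [hp.mul_one_sub_self, hp.one_sub_mul_self, hp.eq, hp.one_sub.eq, mul_zero, zero_mul,
          zero_add, add_zero]

theorem transpose_rowPatch_mul_rowPatch_compl [CharP R 2] {A : Matrix n n R} (hA : A.IsSymm)
    (s : Finset n) : (rowPatch A s)ᵀ * rowPatch A sᶜ = (rowPatch A sᶜ)ᵀ * rowPatch A s := by
  set P : Matrix n n R := Matrix.diagonal fun i => if i ∈ s then 1 else 0 with hP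
  have compl_diagonal : Matrix.diagonal (fun i => if i ∈ s then (0 : R) else 1) = 1 - P := by
    rw [hP, ← Matrix.diagonal_one, Matrix.diagonal_sub]
    congr with i
    split_ifs <;> simp
  have rows : rowPatch A s = P * A + (1 - P) := by
    rw [rowPatch_eq_diagonal_mul_add, compl_diagonal]
  have rows_compl : rowPatch A sᶜ = (1 - P) * A + P := by
    simp only [rowPatch_eq_diagonal_mul_add, Finset.mem_compl, ite_not, compl_diagonal, ← hP]
  have hPt : Pᵀ = P := Matrix.diagonal_transpose _
  have idem : IsIdempotentElem P :=
    (Matrix.diagonal_mul_diagonal _ _).trans (by congr with i; split_ifs <;> simp)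
  have double (X : Matrix n n R) : X + X = 0 := Matrix.ext fun _ _ => CharTwo.add_self_eq_zero _
  have left := mul_add_one_sub_mul_one_sub_mul_add idem A
  have right := mul_add_one_sub_mul_one_sub_mul_add idem.one_sub A
  rw [sub_sub_cancel] at right
  rw [rows, rows_compl]
  simp only [Matrix.transpose_add, Matrix.transpose_sub, Matrix.transpose_one,
    Matrix.transpose_mul, hPt, hA.eq]
  rw [left, right, ← sub_eq_zero]
  calc A * P + (1 - P) * A - (A * (1 - P) + P * A)
      = (A * P + A * P) - (P * A + P * A) := by noncomm_ring
    _ = 0 := by rw [double, double, sub_zero]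

theorem isSymm_principalPivot [CharP R 2] {A : Matrix n n R} (hA : A.IsSymm) {s : Finset n}
    (hs : IsUnit (A.submatrix ((↑) : s → n) (↑)).det) : (principalPivot A s).IsSymm := by
  rw [← det_rowPatch] at hs
  set P := rowPatch A s
  set Q := rowPatch A sᶜ
  have hPt : IsUnit Pᵀ.det := by rwa [Matrix.det_transpose]
  calc (Q * P⁻¹)ᵀ = Pᵀ⁻¹ * (Qᵀ * P) * P⁻¹ := by
        rw [Matrix.transpose_mul, Matrix.transpose_nonsing_inv, ← Matrix.mul_assoc,
          Matrix.mul_nonsing_inv_cancel_right _ _ hs]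
    _ = Pᵀ⁻¹ * (Pᵀ * Q) * P⁻¹ := by rw [transpose_rowPatch_mul_rowPatch_compl hA]
    _ = Q * P⁻¹ := by rw [Matrix.nonsing_inv_mul_cancel_left _ _ hPt]

theorem det_gramMatrix_update_add [Fintype ι] [DecidableEq ι] [CharP R 2]
    {B : LinearMap.BilinForm R M} (hB : B.IsSymm) (v : ι → M) (k : ι) (p q : M) :
    (gramMatrix B (Function.update v k (p + q))).det =
      (gramMatrix B (Function.update v k p)).det + (gramMatrix B (Function.update v k q)).det := by
  let D (p q : M) : R :=
    (Matrix.of fun i j => B (Function.update v k p i) (Function.update v k q j)).det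
  have D_add_left (p p' q : M) : D (p + p') q = D p q + D p' q := by
    have row (p : M) : D p q = (Matrix.updateRow (Matrix.of fun i j =>
        B (v i) (Function.update v k q j)) k fun j => B p (Function.update v k q j)).det := by
      refine congrArg Matrix.det (Matrix.ext fun i j => ?_)
      by_cases hi : i = k <;> simp [hi, Matrix.updateRow_apply]
    simp only [row, ← Matrix.det_updateRow_add]
    simp only [map_add, LinearMap.add_apply]
    rfl
  have D_comm (p q : M) : D p q = D q p := by
    refine (Matrix.det_transpose _).symm.trans (congrArg Matrix.det ?_)
    ext i j
    exact hB.eq _ _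
  have D_add_right (p q q' : M) : D p (q + q') = D p q + D p q' := by
    rw [D_comm, D_add_left, D_comm q, D_comm q']
  calc D (p + q) (p + q) = D p p + D q q + (D p q + D p q) := by
        rw [D_add_left, D_add_right, D_add_right, D_comm q p]; ring
    _ = D p p + D q q := by rw [CharTwo.add_self_eq_zero, add_zero]

end Matrices

section Nondegenerate

theorem isUnit_det_submatrix_iff {ι : Type*} [Fintype ι] [DecidableEq ι]
    (A : Matrix α α (ZMod 2)) (v : ι → α) :
    IsUnit (A.submatrix v v).det ↔
      Function.Injective v ∧ Nondeg A (Finset.univ.image v) := by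
  by_cases hv : Function.Injective v
  · let e : ι ≃ Finset.univ.image v :=
      (Equiv.ofInjective v hv).trans (Equiv.subtypeEquivRight (by simp))
    have reindex : A.submatrix v v = (principalSubmatrix A (Finset.univ.image v)).submatrix e e :=
      rfl
    rw [reindex, Matrix.det_submatrix_equiv_self, Nondeg]
    simp only [hv, true_and]
  · obtain ⟨i, j, hij, hne⟩ := Function.not_injective_iff.mp hv
    have det_eq_zero : (A.submatrix v v).det = 0 :=
      Matrix.det_zero_of_row_eq hne (funext fun k => congrArg (A · (v k)) hij)
    simp [det_eq_zero, hv]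

theorem nondeg_principalSubmatrix_subtype (A : Matrix α α (ZMod 2)) {E U : Finset α}
    (hU : U ⊆ E) :
    Nondeg (principalSubmatrix A E) (U.subtype (· ∈ E)) ↔ Nondeg A U := by
  have image_eq : Finset.univ.image (fun i : U.subtype (· ∈ E) => (i : α)) = U := by
    ext i
    simpa using @hU i
  have injective : Function.Injective fun i : U.subtype (· ∈ E) => (i : α) :=
    Subtype.val_injective.comp Subtype.val_injective
  refine (isUnit_det_submatrix_iff A _).trans ?_
  rw [image_eq, and_iff_right injective]

theorem nondeg_principalPivot {n : Type*} [Fintype n] [DecidableEq n] {A : Matrix n n (ZMod 2)}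
    {s : Finset n} (hs : Nondeg A s) (t : Finset n) :
    Nondeg (principalPivot A s) t ↔ Nondeg A (t ∆ s) := by
  have minors := det_submatrix_principalPivot_mul hs t
  rw [Nondeg, Nondeg, principalSubmatrix, principalSubmatrix, ← minors]
  exact (hs.mul_right_iff).symm

theorem exists_isSymm_nondeg_iff_nondeg_symmDiff {A : Matrix α α (ZMod 2)} (hA : A.IsSymm)
    {E X : Finset α} (hXE : X ⊆ E) (hX : Nondeg A X) :
    ∃ B : Matrix α α (ZMod 2), B.IsSymm ∧ ∀ U ⊆ E, Nondeg B U ↔ Nondeg A (U ∆ X) := by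
  have hAE : (principalSubmatrix A E).IsSymm := hA.submatrix _
  have hX' := (nondeg_principalSubmatrix_subtype A hXE).mpr hX
  obtain ⟨B, hB, hBE⟩ :=
    exists_isSymm_submatrix_eq (isSymm_principalPivot hAE hX')
  change principalSubmatrix B E = _ at hBE
  have subtype_symmDiff (U : Finset α) :
      (U ∆ X).subtype (· ∈ E) = U.subtype (· ∈ E) ∆ X.subtype (· ∈ E) := by
    ext i
    simp [Finset.mem_symmDiff]
  refine ⟨B, hB, fun U hU => ?_⟩
  have hUX : U ∆ X ⊆ E := Finset.symmDiff_subset_union.trans (Finset.union_subset hU hXE)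
  rw [← nondeg_principalSubmatrix_subtype B hU, hBE, nondeg_principalPivot hX',
    ← subtype_symmDiff, nondeg_principalSubmatrix_subtype A hUX]

theorem nondeg_slideMatrix_of_notMem (A : Matrix α α (ZMod 2)) {a : α} (b : α) {U : Finset α}
    (ha : a ∉ U) : Nondeg (slideMatrix A a b) U ↔ Nondeg A U := by
  have restrict : Function.update (fun i : α => Finsupp.single i (1 : ZMod 2)) a
      (Finsupp.single a 1 + Finsupp.single b 1) ∘ ((↑) : U → α) = fun i => Finsupp.single ↑i 1 :=
    Function.update_comp_eq_of_forall_ne _ _ fun i => ne_of_mem_of_not_mem i.2 ha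
  have unchanged : principalSubmatrix (slideMatrix A a b) U = principalSubmatrix A U :=
    calc principalSubmatrix (slideMatrix A a b) U
        = gramMatrix (formOfMatrix A) (fun i : U => Finsupp.single ↑i 1) := by rw [← restrict]; rfl
      _ = principalSubmatrix A U := gramMatrix_formOfMatrix_single A _
  rw [Nondeg, Nondeg, unchanged]

theorem isUnit_add_iff_xor (s t : ZMod 2) : IsUnit (s + t) ↔ Xor (IsUnit s) (IsUnit t) := by
  revert s t
  simp only [isUnit_iff_ne_zero, Xor]
  decide

theorem injective_update_coe_iff {U : Finset α} (k : U) {b : α} (hb : b ≠ (k : α)) :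
    Function.Injective (Function.update ((↑) : U → α) k b) ↔ b ∉ U := by
  refine ⟨fun h hbU => ?_, fun hbU => ?_⟩
  · have hne : (⟨b, hbU⟩ : U) ≠ k := fun h => hb (congrArg Subtype.val h)
    refine hne (h ?_)
    rw [Function.update_self, Function.update_of_ne hne]
  · have ne_b (i : U) : (i : α) ≠ b := ne_of_mem_of_not_mem i.2 hbU
    intro i j hij
    grind [Function.update_apply, Subtype.ext_iff]

theorem image_update_coe {U : Finset α} (k : U) (b : α) :
    Finset.univ.image (Function.update ((↑) : U → α) k b) = insert b (U.erase k) := by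
  ext i
  simp only [Finset.mem_image, Finset.mem_univ, true_and, Function.update_apply]
  constructor
  · grind
  · intro hi
    rcases Finset.mem_insert.mp hi with rfl | hi
    · exact ⟨k, if_pos rfl⟩
    · obtain ⟨hne, hiU⟩ := Finset.mem_erase.mp hi
      exact ⟨⟨i, hiU⟩, if_neg fun h => hne (congrArg Subtype.val h)⟩

theorem nondeg_slideMatrix_of_mem {A : Matrix α α (ZMod 2)} (hA : A.IsSymm) {a b : α}
    (hab : a ≠ b) {U : Finset α} (ha : a ∈ U) :
    Nondeg (slideMatrix A a b) U ↔
      Xor (Nondeg A U) (b ∉ U ∧ Nondeg A (insert b (U.erase a))) := by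
  let k : U := ⟨a, ha⟩
  let basis : U → α →₀ ZMod 2 := fun i => Finsupp.single (i : α) 1
  let replaced : U → α := Function.update (↑) k b
  have gram_slide : principalSubmatrix (slideMatrix A a b) U = gramMatrix (formOfMatrix A)
      (Function.update basis k (Finsupp.single a 1 + Finsupp.single b 1)) :=
    congrArg (gramMatrix (formOfMatrix A))
      (Function.update_comp_eq_of_injective (Finsupp.single · (1 : ZMod 2))
        Subtype.val_injective k _)
  have gram_a : gramMatrix (formOfMatrix A) (Function.update basis k (Finsupp.single a 1)) =
      principalSubmatrix A U := by
    rw [show Finsupp.single a 1 = basis k from rfl, Function.update_eq_self]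
    exact gramMatrix_formOfMatrix_single A _
  have gram_b : gramMatrix (formOfMatrix A) (Function.update basis k (Finsupp.single b 1)) =
      A.submatrix replaced replaced := by
    rw [← gramMatrix_formOfMatrix_single]
    exact congrArg _ (Function.comp_update (Finsupp.single · (1 : ZMod 2)) _ k b).symm
  rw [Nondeg, gram_slide, det_gramMatrix_update_add (isSymm_formOfMatrix hA), gram_a, gram_b,
    isUnit_add_iff_xor, isUnit_det_submatrix_iff, injective_update_coe_iff k hab.symm,
    image_update_coe]
  rfl

end Nondegenerate


section SetSystems

variable {E φ ψ : Finset α} {Φ Ψ : Set (Finset α)} {a b : α}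

theorem mem_twist {T : Finset α} : ψ ∈ twist Φ T ↔ ψ ∆ T ∈ Φ := by
  refine ⟨?_, fun h => ⟨ψ ∆ T, h, (symmDiff_symmDiff_cancel_right T ψ).symm⟩⟩
  rintro ⟨φ, hφ, rfl⟩
  rwa [symmDiff_symmDiff_cancel_right]

theorem mem_slideSet (hab : a ≠ b) :
    ψ ∈ slideSet E Φ a b ↔
      Xor (ψ ∈ Φ) (a ∈ ψ ∧ b ∉ ψ ∧ ψ.erase a ⊆ E ∧ insert b (ψ.erase a) ∈ Φ) := by
  suffices moved_iff : (∃ φ : Finset α, φ ⊆ E \ {a, b} ∧ φ ∪ {b} ∈ Φ ∧ ψ = φ ∪ {a}) ↔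
      a ∈ ψ ∧ b ∉ ψ ∧ ψ.erase a ⊆ E ∧ insert b (ψ.erase a) ∈ Φ by
    rw [← moved_iff]
    rfl
  constructor
  · rintro ⟨φ, hφE, hφ, rfl⟩
    have ha : a ∉ φ := fun h => by simpa using hφE h
    have hb : b ∉ φ := fun h => by simpa using hφE h
    have erase_eq : (φ ∪ {a}).erase a = φ := by
      rw [Finset.union_singleton, Finset.erase_insert ha]
    rw [erase_eq, ← Finset.union_singleton]
    exact ⟨by simp, by simp [hb, hab.symm], hφE.trans Finset.sdiff_subset, hφ⟩
  · rintro ⟨ha, hb, hψE, hψ⟩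
    refine ⟨ψ.erase a, fun i hi => ?_, ?_, ?_⟩
    · have := hψE hi
      grind
    · rwa [Finset.union_singleton]
    · rw [Finset.union_singleton, Finset.insert_erase ha]

theorem mem_slideSet_of_notMem (hab : a ≠ b) (ha : a ∉ ψ) : ψ ∈ slideSet E Φ a b ↔ ψ ∈ Φ := by
  simp [mem_slideSet hab, ha, Xor]

theorem mem_slideSet_of_mem (hab : a ≠ b) (hb : b ∈ ψ) : ψ ∈ slideSet E Φ a b ↔ ψ ∈ Φ := by
  simp [mem_slideSet hab, hb, Xor]

theorem mem_firstMove (hab : a ≠ b) :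
    ψ ∈ firstMove E Φ a b ↔
      Xor (ψ ∈ Φ) (a ∈ ψ ∧ b ∈ ψ ∧ (ψ.erase b).erase a ⊆ E ∧ (ψ.erase b).erase a ∈ Φ) := by
  have a_mem : a ∈ ψ ∆ {b} ↔ a ∈ ψ := by simp [Finset.mem_symmDiff, hab]
  have b_mem : b ∈ ψ ∆ {b} ↔ b ∉ ψ := by simp [Finset.mem_symmDiff]
  have moved_iff : (b ∈ ψ ∧ (ψ ∆ {b}).erase a ⊆ E ∧ insert b ((ψ ∆ {b}).erase a) ∆ {b} ∈ Φ) ↔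
      b ∈ ψ ∧ (ψ.erase b).erase a ⊆ E ∧ (ψ.erase b).erase a ∈ Φ := by
    refine and_congr_right fun hb => ?_
    have erase_b : ψ ∆ {b} = ψ.erase b := by grind [Finset.mem_symmDiff]
    have erase_a : insert b ((ψ.erase b).erase a) ∆ {b} = (ψ.erase b).erase a := by
      grind [Finset.mem_symmDiff]
    rw [erase_b, erase_a]
  rw [firstMove, mem_twist, mem_slideSet hab, mem_twist, mem_twist, symmDiff_symmDiff_cancel_right,
    a_mem, b_mem, not_not, moved_iff]

theorem mem_firstMove_of_notMem_left (hab : a ≠ b) (ha : a ∉ ψ) :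
    ψ ∈ firstMove E Φ a b ↔ ψ ∈ Φ := by
  simp [mem_firstMove hab, ha, Xor]

theorem mem_firstMove_of_notMem_right (hab : a ≠ b) (hb : b ∉ ψ) :
    ψ ∈ firstMove E Φ a b ↔ ψ ∈ Φ := by
  simp [mem_firstMove hab, hb, Xor]

theorem slideSet_eq_self (hab : a ≠ b) (h : ∀ φ ∈ Φ, a ∉ φ → b ∉ φ) :
    slideSet E Φ a b = Φ := by
  ext ψ
  have not_mem : insert b (ψ.erase a) ∉ Φ := fun hψ => h _ hψ (by simp [hab]) (by simp)
  simp [mem_slideSet hab, not_mem, Xor]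

theorem firstMove_eq_self (hab : a ≠ b) (h : ∀ φ ∈ Φ, a ∉ φ → b ∈ φ) :
    firstMove E Φ a b = Φ := by
  ext ψ
  have not_mem : (ψ.erase b).erase a ∉ Φ := fun hψ => by simpa using h _ hψ
  simp [mem_firstMove hab, not_mem, Xor]

theorem conSet_congr (h : ∀ φ, b ∈ φ → (φ ∈ Φ ↔ φ ∈ Ψ)) : conSet Φ b = conSet Ψ b := by
  ext ψ
  refine exists_congr fun φ => ?_
  rw [← and_assoc, ← and_assoc, and_congr_left (h φ)]

theorem delSet_firstMove (hab : a ≠ b) : delSet (firstMove E Φ a b) b = delSet Φ b :=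
  Set.ext fun _ => and_congr_left (mem_firstMove_of_notMem_right hab)

theorem conSet_slideSet (hab : a ≠ b) : conSet (slideSet E Φ a b) b = conSet Φ b :=
  conSet_congr fun _ => mem_slideSet_of_mem hab

theorem conSet_firstMove_slideSet (hab : a ≠ b) :
    conSet (firstMove E (slideSet E Φ a b) a b) b = conSet (firstMove E Φ a b) b :=
  conSet_congr fun φ hb => by
    rw [mem_firstMove hab, mem_firstMove hab, mem_slideSet_of_mem hab hb,
      mem_slideSet_of_notMem hab (Finset.notMem_erase a _)]

theorem isBinaryDeltaMatroid_iff :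
    IsBinaryDeltaMatroid E Φ ↔ ∃ (A : Matrix α α (ZMod 2)) (T : Finset α), A.IsSymm ∧ T ⊆ E ∧
      ∀ φ, φ ∈ Φ ↔ φ ⊆ E ∧ Nondeg A (φ ∆ T) := by
  refine exists₂_congr fun A T => and_congr_right fun _ => and_congr_right fun hT => ?_
  have mem_iff (φ : Finset α) :
      (∃ U ⊆ E, Nondeg A U ∧ φ = U ∆ T) ↔ φ ⊆ E ∧ Nondeg A (φ ∆ T) := by
    constructor
    · rintro ⟨U, hU, hAU, rfl⟩
      rw [symmDiff_symmDiff_cancel_right]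
      exact ⟨Finset.symmDiff_subset_union.trans (Finset.union_subset hU hT), hAU⟩
    · rintro ⟨hφ, hAφ⟩
      exact ⟨φ ∆ T, Finset.symmDiff_subset_union.trans (Finset.union_subset hφ hT), hAφ,
        (symmDiff_symmDiff_cancel_right T φ).symm⟩
  simp only [Set.ext_iff, ← mem_iff]
  rfl

namespace IsBinaryDeltaMatroid

protected theorem subset (h : IsBinaryDeltaMatroid E Φ) (hφ : φ ∈ Φ) : φ ⊆ E := by
  obtain ⟨A, T, -, -, mem_iff⟩ := isBinaryDeltaMatroid_iff.mp h
  exact ((mem_iff φ).mp hφ).1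

theorem exists_isSymm_mem_iff (h : IsBinaryDeltaMatroid E Φ) {S : Finset α} (hS : S ∈ Φ) :
    ∃ A : Matrix α α (ZMod 2), A.IsSymm ∧ ∀ φ, φ ∈ Φ ↔ φ ⊆ E ∧ Nondeg A (φ ∆ S) := by
  obtain ⟨A, T, hA, hT, mem_iff⟩ := isBinaryDeltaMatroid_iff.mp h
  obtain ⟨hSE, hAS⟩ := (mem_iff S).mp hS
  have hST : S ∆ T ⊆ E := Finset.symmDiff_subset_union.trans (Finset.union_subset hSE hT)
  obtain ⟨B, hB, hBU⟩ := exists_isSymm_nondeg_iff_nondeg_symmDiff hA hST hAS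
  refine ⟨B, hB, fun φ => (mem_iff φ).trans (and_congr_right fun hφ => ?_)⟩
  rw [hBU _ (Finset.symmDiff_subset_union.trans (Finset.union_subset hφ hSE)), symmDiff_assoc,
    symmDiff_symmDiff_cancel_left]

protected theorem twist (h : IsBinaryDeltaMatroid E Φ) {S : Finset α} (hS : S ⊆ E) :
    IsBinaryDeltaMatroid E (twist Φ S) := by
  obtain ⟨A, T, hA, hT, mem_iff⟩ := isBinaryDeltaMatroid_iff.mp h
  refine isBinaryDeltaMatroid_iff.mpr ⟨A, S ∆ T, hA,
    Finset.symmDiff_subset_union.trans (Finset.union_subset hS hT), fun φ => ?_⟩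
  have subset_iff : φ ∆ S ⊆ E ↔ φ ⊆ E := by grind [Finset.mem_symmDiff]
  rw [mem_twist, mem_iff, subset_iff, symmDiff_assoc]

protected theorem slideSet (h : IsBinaryDeltaMatroid E Φ) (ha : a ∈ E) (hb : b ∈ E) (hab : a ≠ b)
    {S : Finset α} (hS : S ∈ Φ) (haS : a ∉ S) (hbS : b ∉ S) :
    IsBinaryDeltaMatroid E (slideSet E Φ a b) := by
  -- Take `S` as base point: it avoids `a` and `b`, so twisting by it commutes with the slide.
  obtain ⟨A, hA, mem_iff⟩ := h.exists_isSymm_mem_iff hS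
  refine isBinaryDeltaMatroid_iff.mpr
    ⟨slideMatrix A a b, S, isSymm_slideMatrix hA a b, h.subset hS, fun φ => ?_⟩
  have a_mem : a ∈ φ ∆ S ↔ a ∈ φ := by simp [Finset.mem_symmDiff, haS]
  have b_mem : b ∈ φ ∆ S ↔ b ∈ φ := by simp [Finset.mem_symmDiff, hbS]
  by_cases haφ : a ∈ φ
  · have insert_subset : insert b (φ.erase a) ⊆ E ↔ φ ⊆ E := by grind
    have erase_subset : φ.erase a ⊆ E ↔ φ ⊆ E := by grind
    have insert_symmDiff : insert b (φ.erase a) ∆ S = insert b ((φ ∆ S).erase a) := by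
      grind [Finset.mem_symmDiff]
    rw [mem_slideSet hab, mem_iff, mem_iff, nondeg_slideMatrix_of_mem hA hab (a_mem.mpr haφ), b_mem,
      insert_subset, erase_subset, insert_symmDiff]
    by_cases hφ : φ ⊆ E <;> simp [hφ, haφ, Xor]
  · rw [mem_slideSet_of_notMem hab haφ, mem_iff,
      nondeg_slideMatrix_of_notMem A b (haφ ∘ a_mem.mp)]

protected theorem firstMove (h : IsBinaryDeltaMatroid E Φ) (ha : a ∈ E) (hb : b ∈ E) (hab : a ≠ b)
    {S : Finset α} (hS : S ∈ Φ) (haS : a ∉ S) (hbS : b ∈ S) :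
    IsBinaryDeltaMatroid E (firstMove E Φ a b) := by
  have hbE : {b} ⊆ E := Finset.singleton_subset_iff.mpr hb
  refine ((h.twist hbE).slideSet ha hb hab ⟨S, hS, rfl⟩ ?_ ?_).twist hbE
  · simp [Finset.mem_symmDiff, haS, hab]
  · simp [Finset.mem_symmDiff, hbS]

end IsBinaryDeltaMatroid

theorem tutte_implies_fourTerm_general {M : Type*} [AddCommGroup M]
    (f g h : Finset α → Set (Finset α) → M)
    (hf : ∀ (E : Finset α) (Φ : Set (Finset α)), IsBinaryDeltaMatroid E Φ → ∀ e ∈ E,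
      (∃ φ ∈ Φ, e ∈ φ) → (∃ φ ∈ Φ, e ∉ φ) →
        f E Φ = g (E.erase e) (delSet Φ e) + h (E.erase e) (conSet Φ e))
    (hD : IsBinaryDeltaMatroid E Φ) (ha : a ∈ E) (hb : b ∈ E) (hab : a ≠ b) :
    f E Φ - f E (firstMove E Φ a b) =
      f E (slideSet E Φ a b) - f E (firstMove E (slideSet E Φ a b) a b) := by
  by_cases! hP : ∀ φ ∈ Φ, a ∉ φ → b ∈ φ
  · have hP' : ∀ φ ∈ slideSet E Φ a b, a ∉ φ → b ∈ φ := fun φ hφ haφ =>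
      hP φ ((mem_slideSet_of_notMem hab haφ).mp hφ) haφ
    rw [firstMove_eq_self hab hP, firstMove_eq_self hab hP', sub_self, sub_self]
  by_cases! hQ : ∀ φ ∈ Φ, a ∉ φ → b ∉ φ
  · rw [slideSet_eq_self hab hQ]
  obtain ⟨P, hP, haP, hbP⟩ := hP
  obtain ⟨Q, hQ, haQ, hbQ⟩ := hQ
  have slide_iff {φ} (haφ : a ∉ φ) : φ ∈ slideSet E Φ a b ↔ φ ∈ Φ :=
    mem_slideSet_of_notMem hab haφ
  have hS := hD.slideSet ha hb hab hP haP hbP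
  have expand {Ψ : Set (Finset α)} (hΨ : IsBinaryDeltaMatroid E Ψ)
      (mem_iff : ∀ φ, a ∉ φ → (φ ∈ Ψ ↔ φ ∈ Φ)) :
      f E Ψ = g (E.erase b) (delSet Ψ b) + h (E.erase b) (conSet Ψ b) :=
    hf E Ψ hΨ b hb ⟨Q, (mem_iff Q haQ).mpr hQ, hbQ⟩ ⟨P, (mem_iff P haP).mpr hP, hbP⟩
  rw [expand hD fun _ _ => Iff.rfl, expand hS fun _ => slide_iff,
    expand (hD.firstMove ha hb hab hQ haQ hbQ) fun _ => mem_firstMove_of_notMem_left hab,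
    expand (hS.firstMove ha hb hab ((slide_iff haQ).mpr hQ) haQ hbQ) fun _ haφ =>
      (mem_firstMove_of_notMem_left hab haφ).trans (slide_iff haφ),
    delSet_firstMove hab, delSet_firstMove hab, conSet_slideSet hab, conSet_firstMove_slideSet hab]
  abel

end SetSystems

/-- Any invariant `f` of binary delta-matroids (with ground sets that
are finite sets of natural numbers) with values in a commutative ring satisfying the
Tutte relations satisfies the 4-term relation
`f(D) − f(D\'_{ab}) = f(D~_{ab}) − f((D~_{ab})\'_{ab})`. -/
theorem tutte_implies_fourTerm {R : Type*} [CommRing R] (x y z w : R)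
    (f : Finset ℕ → Set (Finset ℕ) → R)
    (hTutte_del_con : ∀ (E : Finset ℕ) (Φ : Set (Finset ℕ)),
      IsBinaryDeltaMatroid E Φ → ∀ e ∈ E,
        (∃ φ ∈ Φ, e ∈ φ) → (∃ φ ∈ Φ, e ∉ φ) →
          f E Φ = x * f (E.erase e) (delSet Φ e) + y * f (E.erase e) (conSet Φ e))
    (hTutte_loop : ∀ (E : Finset ℕ) (Φ : Set (Finset ℕ)),
      IsBinaryDeltaMatroid E Φ → ∀ e ∈ E, (∀ φ ∈ Φ, e ∉ φ) →
        f E Φ = z * f (E.erase e) (delSet Φ e))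
    (hTutte_coloop : ∀ (E : Finset ℕ) (Φ : Set (Finset ℕ)),
      IsBinaryDeltaMatroid E Φ → ∀ e ∈ E, (∀ φ ∈ Φ, e ∈ φ) →
        f E Φ = w * f (E.erase e) (conSet Φ e)) :
    ∀ (E : Finset ℕ) (Φ : Set (Finset ℕ)), IsBinaryDeltaMatroid E Φ →
      ∀ a ∈ E, ∀ b ∈ E, a ≠ b →
        f E Φ - f E (firstMove E Φ a b)
          = f E (slideSet E Φ a b) - f E (firstMove E (slideSet E Φ a b) a b) := by
  intro E Φ hD a ha b hb hab
  exact tutte_implies_fourTerm_general f (fun E Φ => x * f E Φ) (fun E Φ => y * f E Φ)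
    hTutte_del_con hD ha hb hab
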